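/- Let ρ be a positive-definite density operator on a chain H = H_1 ⊗ … ⊗ H_n with the nearest-neighbor neighborhood structure N = {N_j = {j, j+1} : j = 1, …, n−1}, and suppose ρ is FFQLS relative to N. If for some l the minimal modular-invariant distorted algebra generated by the neighborhood Schmidt span is the full neighborhood algebra, F_{ρ_{l,l+1}}(Σ_{l,l+1}(ρ)) = B(H_l ⊗ H_{l+1}), then ρ factorizes across the cut between sites l and l+1: ρ = ρ_{1…l} ⊗ ρ_{l+1…n} for some density operators ρ_{1…l} on H_1 ⊗ … ⊗ H_l and ρ_{l+1…n} on H_{l+1} ⊗ … ⊗ H_n. -/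

import Mathlib

namespace QDS

open Matrix
open scoped ComplexOrder

/-! ### Basic single-system notions -/

section Single

variable {ι : Type*} [Fintype ι] [DecidableEq ι]

open Classical in
/-- The (unique) positive-semidefinite square root of a positive-semidefinite matrix
(junk value `0` if no positive-semidefinite square root exists). -/
noncomputable def msqrt (A : Matrix ι ι ℂ) : Matrix ι ι ℂ :=
  if h : ∃ B : Matrix ι ι ℂ, B.PosSemidef ∧ B * B = A then h.choose else 0

open Classical in
/-- The Moore–Penrose pseudoinverse of a matrix, defined via its characterizing
properties (it always exists and is unique for complex matrices). -/
noncomputable def mpinv (A : Matrix ι ι ℂ) : Matrix ι ι ℂ :=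
  if h : ∃ B : Matrix ι ι ℂ,
      A * B * A = A ∧ B * A * B = B ∧ (A * B)ᴴ = A * B ∧ (B * A)ᴴ = B * A
  then h.choose else 0

/-- A density operator: positive semidefinite with unit trace. -/
def IsDensity (ρ : Matrix ι ι ℂ) : Prop := ρ.PosSemidef ∧ ρ.trace = 1

/-- A CPTP map in Kraus (operator-sum) form. -/
def IsCPTP (T : Matrix ι ι ℂ →ₗ[ℂ] Matrix ι ι ℂ) : Prop :=
  ∃ (m : ℕ) (M : Fin m → Matrix ι ι ℂ),
    (∀ X, T X = ∑ k, M k * X * (M k)ᴴ) ∧ (∑ k, (M k)ᴴ * M k) = 1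

/-- The Lindblad (QDS) generator with Hamiltonian `Hm` and noise operators `Lk`:
`L(X) = -i[Hm, X] + Σₖ (Lₖ X Lₖ† - ½{Lₖ†Lₖ, X})`. -/
noncomputable def lindbladMap (Hm : Matrix ι ι ℂ) {m : ℕ} (Lk : Fin m → Matrix ι ι ℂ) :
    Matrix ι ι ℂ →ₗ[ℂ] Matrix ι ι ℂ :=
  (-Complex.I) • (LinearMap.mulLeft ℂ Hm - LinearMap.mulRight ℂ Hm) +
    ∑ k, ((LinearMap.mulRight ℂ (Lk k)ᴴ).comp (LinearMap.mulLeft ℂ (Lk k)) -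
      ((1 : ℂ)/2) • (LinearMap.mulLeft ℂ ((Lk k)ᴴ * Lk k) +
        LinearMap.mulRight ℂ ((Lk k)ᴴ * Lk k)))

/-- `L` is a QDS (Lindblad) generator. -/
def IsLindblad (L : Matrix ι ι ℂ →ₗ[ℂ] Matrix ι ι ℂ) : Prop :=
  ∃ Hm : Matrix ι ι ℂ, Hm.IsHermitian ∧
    ∃ (m : ℕ) (Lk : Fin m → Matrix ι ι ℂ), L = lindbladMap Hm Lk

/-- `Ld` is the Hilbert–Schmidt adjoint of `L` (w.r.t. `⟨X,Y⟩ = Tr(X†Y)`). -/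
def IsHSAdjoint (L Ld : Matrix ι ι ℂ →ₗ[ℂ] Matrix ι ι ℂ) : Prop :=
  ∀ X Y : Matrix ι ι ℂ, ((Ld X)ᴴ * Y).trace = (Xᴴ * L Y).trace

/-- The fixed-point set of a (super)operator. -/
def fixSet (T : Matrix ι ι ℂ →ₗ[ℂ] Matrix ι ι ℂ) : Set (Matrix ι ι ℂ) := {X | T X = X}

/-- The support of an operator: the orthogonal complement of its kernel,
equivalently the range of its adjoint. -/
noncomputable def msupp (A : Matrix ι ι ℂ) : Submodule ℂ (ι → ℂ) := LinearMap.range (Aᴴ).mulVecLin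

/-- The support of a set of operators: the span of the union of their supports. -/
noncomputable def suppSet (W : Set (Matrix ι ι ℂ)) : Submodule ℂ (ι → ℂ) := ⨆ O ∈ W, msupp O

/-- The minimal modular-invariant distorted algebra generated by `W` relative to `ρ`:
the smallest subspace containing `W` that is closed under the adjoint, under the
`ρ`-modified product `(X,Y) ↦ X ρ⁻ Y`, and under the modular map `X ↦ ρ^{1/2} X ρ⁻^{1/2}`. -/
noncomputable def Fdist (ρ : Matrix ι ι ℂ) (W : Set (Matrix ι ι ℂ)) :
    Submodule ℂ (Matrix ι ι ℂ) :=
  sInf {S : Submodule ℂ (Matrix ι ι ℂ) | W ⊆ S ∧ (∀ X ∈ S, Xᴴ ∈ S) ∧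
    (∀ X ∈ S, ∀ Y ∈ S, X * mpinv ρ * Y ∈ S) ∧
    (∀ X ∈ S, msqrt ρ * X * mpinv (msqrt ρ) ∈ S)}

/-- `ρ` is globally asymptotically stable for the generator `L`: it is invariant and every
solution of `ẋ = L(x)` starting at a density operator converges to `ρ` as `t → ∞`. -/
def IsGAS (L : Matrix ι ι ℂ →ₗ[ℂ] Matrix ι ι ℂ) (ρ : Matrix ι ι ℂ) : Prop :=
  L ρ = 0 ∧
  ∀ σ : Matrix ι ι ℂ, IsDensity σ →
    ∀ x : ℝ → Matrix ι ι ℂ, x 0 = σ →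
      (∀ t : ℝ, ∀ i j, HasDerivAt (fun s : ℝ => x s i j) (L (x t) i j) t) →
      ∀ i j, Filter.Tendsto (fun t : ℝ => x t i j) Filter.atTop (nhds (ρ i j))

end Single

/-! ### Bipartite notions -/

section Bipartite

variable {α β : Type*} [Fintype α] [Fintype β] [DecidableEq α] [DecidableEq β]

/-- Partial trace over the second factor. -/
noncomputable def ptraceB (ρ : Matrix (α × β) (α × β) ℂ) : Matrix α α ℂ :=
  Matrix.of fun i j => ∑ k : β, ρ (i, k) (j, k)

/-- The operator Schmidt span of `ρ` on the first factor:
`{Tr_B[(I ⊗ B) ρ] : B ∈ B(H_B)}`. -/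
noncomputable def opSchmidtA (ρ : Matrix (α × β) (α × β) ℂ) : Set (Matrix α α ℂ) :=
  {A | ∃ B : Matrix β β ℂ,
    A = ptraceB ((Matrix.kroneckerMap (· * ·) (1 : Matrix α α ℂ) B) * ρ)}

/-- The (vector) Schmidt span of `v ∈ V_A ⊗ V_B` relative to `V_A`: the image of `v`
under partial inner products with vectors of `V_B`. -/
def vSchmidtA (v : α × β → ℂ) : Set (α → ℂ) :=
  {w | ∃ b : β → ℂ, w = fun a => ∑ j, (starRingEnd ℂ) (b j) * v (a, j)}

/-- `Σ_A(v) ⊗ V_B` as a subspace of `V_A ⊗ V_B`. -/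
noncomputable def extVSchmidtA (v : α × β → ℂ) : Submodule ℂ (α × β → ℂ) :=
  Submodule.span ℂ {v' | ∃ w ∈ vSchmidtA v, ∃ b : β → ℂ, v' = fun p => w p.1 * b p.2}

end Bipartite

/-! ### Multipartite notions -/

section Multipartite

variable {n : ℕ} {d : Fin n → Type*} [∀ a, Fintype (d a)] [∀ a, DecidableEq (d a)]

/-- Index type of the neighborhood factor `H_N`. -/
abbrev nbhdIdx (d : Fin n → Type*) (N : Finset (Fin n)) : Type _ :=
  ∀ a : {x : Fin n // x ∈ N}, d a

/-- Index type of the complementary factor `H_N̄`. -/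
abbrev nbhdCoIdx (d : Fin n → Type*) (N : Finset (Fin n)) : Type _ :=
  ∀ a : {x : Fin n // ¬ x ∈ N}, d a

/-- The factorization `H ≃ H_N ⊗ H_N̄` at the level of index types. -/
def splitEquiv (d : Fin n → Type*) (N : Finset (Fin n)) :
    (∀ a, d a) ≃ nbhdIdx d N × nbhdCoIdx d N :=
  Equiv.piEquivPiSubtypeProd (fun x => x ∈ N) d

variable (d)

/-- The operator `A ⊗ B` on `H = H_N ⊗ H_N̄`, viewed as an operator on `H`. -/
noncomputable def splitLift (N : Finset (Fin n))
    (A : Matrix (nbhdIdx d N) (nbhdIdx d N) ℂ)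
    (B : Matrix (nbhdCoIdx d N) (nbhdCoIdx d N) ℂ) :
    Matrix (∀ a, d a) (∀ a, d a) ℂ :=
  (Matrix.kroneckerMap (· * ·) A B).submatrix (splitEquiv d N) (splitEquiv d N)

/-- The neighborhood operator `A ⊗ I_N̄` on `H`. -/
noncomputable def nbhdLift (N : Finset (Fin n))
    (A : Matrix (nbhdIdx d N) (nbhdIdx d N) ℂ) : Matrix (∀ a, d a) (∀ a, d a) ℂ :=
  splitLift d N A 1

/-- The operator `I_N ⊗ B` on `H`. -/
noncomputable def coLift (N : Finset (Fin n))
    (B : Matrix (nbhdCoIdx d N) (nbhdCoIdx d N) ℂ) : Matrix (∀ a, d a) (∀ a, d a) ℂ :=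
  splitLift d N 1 B

/-- The reduced state `ρ_N = Tr_N̄(ρ)` on the neighborhood `N`. -/
noncomputable def nbhdPtrace (N : Finset (Fin n)) (ρ : Matrix (∀ a, d a) (∀ a, d a) ℂ) :
    Matrix (nbhdIdx d N) (nbhdIdx d N) ℂ :=
  Matrix.of fun i j => ∑ k : nbhdCoIdx d N,
    ρ ((splitEquiv d N).symm (i, k)) ((splitEquiv d N).symm (j, k))

/-- The operator Schmidt span of `ρ` on the neighborhood `N`:
`Σ_N(ρ) = {Tr_N̄[(I_N ⊗ B) ρ] : B}`. -/
noncomputable def nbhdSchmidt (N : Finset (Fin n)) (ρ : Matrix (∀ a, d a) (∀ a, d a) ℂ) :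
    Set (Matrix (nbhdIdx d N) (nbhdIdx d N) ℂ) :=
  {A | ∃ B : Matrix (nbhdCoIdx d N) (nbhdCoIdx d N) ℂ,
    A = nbhdPtrace d N (coLift d N B * ρ)}

/-- The extended minimal modular-invariant distorted algebra
`F_{ρ_N}(Σ_N(ρ)) ⊗ B(H_N̄)` as a subspace of `B(H)`. -/
noncomputable def extF (N : Finset (Fin n)) (ρ : Matrix (∀ a, d a) (∀ a, d a) ℂ) :
    Submodule ℂ (Matrix (∀ a, d a) (∀ a, d a) ℂ) :=
  Submodule.span ℂ {X | ∃ A ∈ Fdist (nbhdPtrace d N ρ) (nbhdSchmidt d N ρ),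
    ∃ B : Matrix (nbhdCoIdx d N) (nbhdCoIdx d N) ℂ, X = splitLift d N A B}

/-- A neighborhood QDS generator for `N`: a Lindblad generator whose Hamiltonian and
noise operators all act as `X_N ⊗ I_N̄`. -/
def IsNbhdGen (N : Finset (Fin n))
    (L : Matrix (∀ a, d a) (∀ a, d a) ℂ →ₗ[ℂ] Matrix (∀ a, d a) (∀ a, d a) ℂ) : Prop :=
  ∃ HN : Matrix (nbhdIdx d N) (nbhdIdx d N) ℂ, HN.IsHermitian ∧
    ∃ (m : ℕ) (Lk : Fin m → Matrix (nbhdIdx d N) (nbhdIdx d N) ℂ),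
      L = lindbladMap (nbhdLift d N HN) fun k => nbhdLift d N (Lk k)

/-- A purely dissipative neighborhood generator for `N` (zero Hamiltonian in some
Lindblad representation). -/
def IsDissipNbhdGen (N : Finset (Fin n))
    (L : Matrix (∀ a, d a) (∀ a, d a) ℂ →ₗ[ℂ] Matrix (∀ a, d a) (∀ a, d a) ℂ) : Prop :=
  ∃ (m : ℕ) (Lk : Fin m → Matrix (nbhdIdx d N) (nbhdIdx d N) ℂ),
    L = lindbladMap 0 fun k => nbhdLift d N (Lk k)

/-- The family of neighborhood generators `Lj` is frustration free: every invariant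
state of the sum is invariant for each component. -/
def IsFFFamily {M : ℕ}
    (Lj : Fin M → (Matrix (∀ a, d a) (∀ a, d a) ℂ →ₗ[ℂ] Matrix (∀ a, d a) (∀ a, d a) ℂ)) :
    Prop :=
  ∀ ρ : Matrix (∀ a, d a) (∀ a, d a) ℂ, IsDensity ρ → (∑ j, Lj j) ρ = 0 → ∀ j, Lj j ρ = 0

/-- `ρ` is frustration-free quasi-locally stabilizable relative to the neighborhood
structure `Nb`. -/
def IsFFQLS {M : ℕ} (Nb : Fin M → Finset (Fin n))
    (ρ : Matrix (∀ a, d a) (∀ a, d a) ℂ) : Prop :=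
  ∃ Lj : Fin M → (Matrix (∀ a, d a) (∀ a, d a) ℂ →ₗ[ℂ] Matrix (∀ a, d a) (∀ a, d a) ℂ),
    (∀ j, IsNbhdGen d (Nb j) (Lj j)) ∧ IsFFFamily d Lj ∧ IsGAS (∑ j, Lj j) ρ

/-- A pure state `|ψ⟩⟨ψ|` is dissipatively quasi-locally stabilizable relative to `Nb`:
it is GAS for a QL generator whose components have zero Hamiltonian and neighborhood
noise operators annihilating `ψ`. -/
def IsDQLS {M : ℕ} (Nb : Fin M → Finset (Fin n)) (ψ : (∀ a, d a) → ℂ) : Prop :=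
  ∃ Lj : Fin M → (Matrix (∀ a, d a) (∀ a, d a) ℂ →ₗ[ℂ] Matrix (∀ a, d a) (∀ a, d a) ℂ),
    (∀ j, ∃ (m : ℕ) (Dk : Fin m → Matrix (nbhdIdx d (Nb j)) (nbhdIdx d (Nb j)) ℂ),
      Lj j = lindbladMap 0 (fun k => nbhdLift d (Nb j) (Dk k)) ∧
      ∀ k, (nbhdLift d (Nb j) (Dk k)).mulVec ψ = 0) ∧
    IsGAS (∑ j, Lj j) (Matrix.vecMulVec ψ (star ψ))

/-- The (vector) Schmidt span of `ψ` relative to the neighborhood factor `H_N`. -/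
def vecSchmidt (N : Finset (Fin n)) (ψ : (∀ a, d a) → ℂ) : Set (nbhdIdx d N → ℂ) :=
  {w | ∃ b : nbhdCoIdx d N → ℂ,
    w = fun i => ∑ k, (starRingEnd ℂ) (b k) * ψ ((splitEquiv d N).symm (i, k))}

/-- `Σ_N(ψ) ⊗ H_N̄` as a subspace of `H`. -/
noncomputable def extVecSchmidt (N : Finset (Fin n)) (ψ : (∀ a, d a) → ℂ) :
    Submodule ℂ ((∀ a, d a) → ℂ) :=
  Submodule.span ℂ {v | ∃ w ∈ vecSchmidt d N ψ, ∃ b : nbhdCoIdx d N → ℂ,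
    v = fun x => w ((splitEquiv d N) x).1 * b ((splitEquiv d N) x).2}

end Multipartite


/-! ### Auxiliary material: a single system -/

section AuxSingle

variable {ι : Type*} [Fintype ι] [DecidableEq ι]

theorem lindbladMap_apply (Hm : Matrix ι ι ℂ) {m : ℕ} (Lk : Fin m → Matrix ι ι ℂ)
    (X : Matrix ι ι ℂ) : lindbladMap Hm Lk X = (-Complex.I) • (Hm * X - X * Hm) +
      ∑ k, (Lk k * X * (Lk k)ᴴ - ((1 : ℂ)/2) • ((Lk k)ᴴ * Lk k * X + X * ((Lk k)ᴴ * Lk k))) := by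
  simp [lindbladMap, LinearMap.sum_apply, Matrix.mul_assoc]

/-- The Heisenberg-picture generator. -/
noncomputable def heis (Hm : Matrix ι ι ℂ) {m : ℕ} (Lk : Fin m → Matrix ι ι ℂ) :
    Matrix ι ι ℂ →ₗ[ℂ] Matrix ι ι ℂ :=
  (Complex.I) • (LinearMap.mulLeft ℂ Hm - LinearMap.mulRight ℂ Hm) +
    ∑ k, ((LinearMap.mulRight ℂ (Lk k)).comp (LinearMap.mulLeft ℂ (Lk k)ᴴ) -
      ((1 : ℂ)/2) • (LinearMap.mulLeft ℂ ((Lk k)ᴴ * Lk k) +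
        LinearMap.mulRight ℂ ((Lk k)ᴴ * Lk k)))

theorem heis_apply (Hm : Matrix ι ι ℂ) {m : ℕ} (Lk : Fin m → Matrix ι ι ℂ)
    (X : Matrix ι ι ℂ) : heis Hm Lk X = (Complex.I) • (Hm * X - X * Hm) +
      ∑ k, ((Lk k)ᴴ * X * (Lk k) - ((1 : ℂ)/2) • ((Lk k)ᴴ * Lk k * X + X * ((Lk k)ᴴ * Lk k))) := by
  simp [heis, LinearMap.sum_apply, Matrix.mul_assoc]

theorem trace_heis (Hm : Matrix ι ι ℂ) {m : ℕ} (Lk : Fin m → Matrix ι ι ℂ)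
    (X Y : Matrix ι ι ℂ) : (heis Hm Lk X * Y).trace = (X * lindbladMap Hm Lk Y).trace := by
  rw [heis_apply, lindbladMap_apply, add_mul, mul_add, trace_add, trace_add]
  congr 1
  · rw [Matrix.smul_mul, Matrix.mul_smul, trace_smul, trace_smul, sub_mul, mul_sub, trace_sub,
      trace_sub, Matrix.mul_assoc Hm, Matrix.trace_mul_comm Hm, Matrix.mul_assoc X Y,
      Matrix.mul_assoc X Hm]
    simp only [smul_eq_mul]
    ring
  · rw [Finset.sum_mul, Finset.mul_sum, trace_sum, trace_sum]
    refine Finset.sum_congr rfl fun k _ => ?_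
    rw [sub_mul, mul_sub, trace_sub, trace_sub, Matrix.smul_mul, Matrix.mul_smul, trace_smul,
      trace_smul, add_mul, mul_add, trace_add, trace_add]
    have h1 : ((Lk k)ᴴ * X * Lk k * Y).trace = (X * (Lk k * Y * (Lk k)ᴴ)).trace := by
      rw [Matrix.mul_assoc, Matrix.mul_assoc, Matrix.trace_mul_comm]
      simp only [Matrix.mul_assoc]
    have h2 : ((Lk k)ᴴ * Lk k * X * Y).trace = (X * (Y * ((Lk k)ᴴ * Lk k))).trace := by
      rw [Matrix.mul_assoc, Matrix.trace_mul_comm]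
      simp only [Matrix.mul_assoc]
    have h3 : (X * ((Lk k)ᴴ * Lk k) * Y).trace = (X * (((Lk k)ᴴ * Lk k) * Y)).trace := by
      simp only [Matrix.mul_assoc]
    rw [h1, h2, h3, add_comm (trace (X * (Y * ((Lk k)ᴴ * Lk k))))]

theorem heis_star {Hm : Matrix ι ι ℂ} (hH : Hm.IsHermitian) {m : ℕ} (Lk : Fin m → Matrix ι ι ℂ)
    (X : Matrix ι ι ℂ) : heis Hm Lk Xᴴ = (heis Hm Lk X)ᴴ := by
  rw [heis_apply, heis_apply, conjTranspose_add, conjTranspose_sum]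
  congr 1
  · rw [conjTranspose_smul, conjTranspose_sub, conjTranspose_mul, conjTranspose_mul, hH.eq]
    simp [smul_sub]
    abel
  · refine Finset.sum_congr rfl fun k _ => ?_
    rw [conjTranspose_sub, conjTranspose_smul]
    simp [conjTranspose_mul, Matrix.mul_assoc, add_comm]

theorem lindblad_star {Hm : Matrix ι ι ℂ} (hH : Hm.IsHermitian) {m : ℕ}
    (Lk : Fin m → Matrix ι ι ℂ)
    (X : Matrix ι ι ℂ) : lindbladMap Hm Lk Xᴴ = (lindbladMap Hm Lk X)ᴴ := by
  rw [lindbladMap_apply, lindbladMap_apply, conjTranspose_add, conjTranspose_sum]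
  congr 1
  · rw [conjTranspose_smul, conjTranspose_sub, conjTranspose_mul, conjTranspose_mul, hH.eq]
    simp [smul_sub]
    abel
  · refine Finset.sum_congr rfl fun k _ => ?_
    rw [conjTranspose_sub, conjTranspose_smul]
    simp [conjTranspose_mul, Matrix.mul_assoc, add_comm]

theorem heis_dissip {Hm : Matrix ι ι ℂ} {m : ℕ} (Lk : Fin m → Matrix ι ι ℂ)
    (X : Matrix ι ι ℂ) : heis Hm Lk (Xᴴ * X) - heis Hm Lk Xᴴ * X - Xᴴ * heis Hm Lk X =
      ∑ k, (Lk k * X - X * Lk k)ᴴ * (Lk k * X - X * Lk k) := by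
  rw [heis_apply, heis_apply, heis_apply]
  rw [add_mul, mul_add, Finset.sum_mul, Finset.mul_sum]
  have hk : ∀ k, (Lk k * X - X * Lk k)ᴴ * (Lk k * X - X * Lk k) =
      ((Lk k)ᴴ * (Xᴴ * X) * (Lk k) -
        ((1 : ℂ)/2) • ((Lk k)ᴴ * Lk k * (Xᴴ * X) + (Xᴴ * X) * ((Lk k)ᴴ * Lk k)))
      - ((Lk k)ᴴ * Xᴴ * (Lk k) -
        ((1 : ℂ)/2) • ((Lk k)ᴴ * Lk k * Xᴴ + Xᴴ * ((Lk k)ᴴ * Lk k))) * X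
      - Xᴴ * ((Lk k)ᴴ * X * (Lk k) -
        ((1 : ℂ)/2) • ((Lk k)ᴴ * Lk k * X + X * ((Lk k)ᴴ * Lk k))) := by
    intro k
    simp only [conjTranspose_sub, conjTranspose_mul, mul_sub, sub_mul, Matrix.smul_mul,
      Matrix.mul_smul, mul_add, add_mul, Matrix.mul_assoc, smul_add]
    module
  rw [Finset.sum_congr rfl fun k _ => hk k]
  have hc : Complex.I • (Hm * (Xᴴ * X) - Xᴴ * X * Hm) = Complex.I • (Hm * Xᴴ - Xᴴ * Hm) * X +
      Xᴴ * Complex.I • (Hm * X - X * Hm) := by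
    simp only [mul_sub, sub_mul, Matrix.smul_mul, Matrix.mul_smul, Matrix.mul_assoc, smul_sub]
    abel
  rw [hc]
  simp only [Finset.sum_sub_distrib]
  abel

theorem eq_zero_of_trace_posDef {ρ C : Matrix ι ι ℂ} (hρ : ρ.PosDef)
    (h : (C * ρ * Cᴴ).trace = 0) : C = 0 := by
  have h2 := (hρ.posSemidef.mul_mul_conjTranspose_same C).trace_eq_zero_iff.1 h
  rw [← conjTranspose_eq_zero]
  have : ∀ x, Cᴴ *ᵥ x = 0 := by
    intro x
    by_contra hx
    have h3 := hρ.dotProduct_mulVec_pos hx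
    have h4 : star (Cᴴ *ᵥ x) ⬝ᵥ ρ *ᵥ (Cᴴ *ᵥ x) = star x ⬝ᵥ ((C * ρ * Cᴴ) *ᵥ x) := by
      rw [star_mulVec, conjTranspose_conjTranspose, ← dotProduct_mulVec, mulVec_mulVec,
        mulVec_mulVec, Matrix.mul_assoc]
    rw [h4, h2] at h3
    simp at h3
  ext i j
  have := congrFun (this (Pi.single j 1)) i
  simpa using this

theorem comm_of_heis {Hm : Matrix ι ι ℂ} {m : ℕ} {Lk : Fin m → Matrix ι ι ℂ}
    (hH : Hm.IsHermitian) {ρ : Matrix ι ι ℂ} (hρ : ρ.PosDef) (h0 : lindbladMap Hm Lk ρ = 0)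
    {X : Matrix ι ι ℂ} (hX : heis Hm Lk X = 0) (k : Fin m) : Lk k * X = X * Lk k := by
  have h1 := heis_dissip (Hm := Hm) Lk X
  rw [heis_star hH, hX] at h1
  simp only [conjTranspose_zero, zero_mul, mul_zero, sub_zero] at h1
  have h2 := trace_heis Hm Lk (Xᴴ * X) ρ
  rw [h0, mul_zero, trace_zero, h1, Finset.sum_mul, trace_sum] at h2
  have h3 : ∀ C : Matrix ι ι ℂ, (Cᴴ * C * ρ).trace = (C * ρ * Cᴴ).trace := by
    intro C
    rw [Matrix.mul_assoc, Matrix.trace_mul_comm]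
  simp only [h3] at h2
  rw [Finset.sum_eq_zero_iff_of_nonneg
    (fun k _ => (hρ.posSemidef.mul_mul_conjTranspose_same _).trace_nonneg)] at h2
  exact sub_eq_zero.1 (eq_zero_of_trace_posDef hρ (h2 k (Finset.mem_univ _)))

theorem comm_of_heis' {Hm : Matrix ι ι ℂ} {m : ℕ} {Lk : Fin m → Matrix ι ι ℂ}
    (hH : Hm.IsHermitian) {ρ : Matrix ι ι ℂ} (hρ : ρ.PosDef) (h0 : lindbladMap Hm Lk ρ = 0)
    {X : Matrix ι ι ℂ} (hX : heis Hm Lk X = 0) (k : Fin m) : (Lk k)ᴴ * X = X * (Lk k)ᴴ := by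
  have := comm_of_heis hH hρ h0 (X := Xᴴ) (by rw [heis_star hH, hX, conjTranspose_zero]) k
  have := congrArg conjTranspose this
  simpa [conjTranspose_mul] using this.symm

theorem comm_H_of_heis {Hm : Matrix ι ι ℂ} {m : ℕ} {Lk : Fin m → Matrix ι ι ℂ}
    (hH : Hm.IsHermitian) {ρ : Matrix ι ι ℂ} (hρ : ρ.PosDef) (h0 : lindbladMap Hm Lk ρ = 0)
    {X : Matrix ι ι ℂ} (hX : heis Hm Lk X = 0) : Hm * X = X * Hm := by
  have h := hX
  rw [heis_apply, Finset.sum_eq_zero, add_zero] at h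
  · exact sub_eq_zero.1 ((smul_eq_zero.1 h).resolve_left Complex.I_ne_zero)
  · intro k _
    have a := comm_of_heis hH hρ h0 hX k
    have b := comm_of_heis' hH hρ h0 hX k
    have e1 : (Lk k)ᴴ * X * Lk k = (Lk k)ᴴ * Lk k * X := by
      rw [Matrix.mul_assoc, ← a, Matrix.mul_assoc]
    have e2 : X * ((Lk k)ᴴ * Lk k) = (Lk k)ᴴ * Lk k * X := by
      rw [← Matrix.mul_assoc, ← b, e1]
    rw [e1, e2]
    module

theorem lindblad_mul_left {Hm : Matrix ι ι ℂ} {m : ℕ} {Lk : Fin m → Matrix ι ι ℂ}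
    (hH : Hm.IsHermitian) {ρ : Matrix ι ι ℂ} (hρ : ρ.PosDef) (h0 : lindbladMap Hm Lk ρ = 0)
    {X : Matrix ι ι ℂ} (hX : heis Hm Lk X = 0) : lindbladMap Hm Lk (X * ρ) = 0 := by
  have : lindbladMap Hm Lk (X * ρ) = X * lindbladMap Hm Lk ρ := by
    rw [lindbladMap_apply, lindbladMap_apply, mul_add, Finset.mul_sum]
    congr 1
    · rw [← Matrix.mul_assoc, comm_H_of_heis hH hρ h0 hX, Matrix.mul_smul, mul_sub]
      simp only [Matrix.mul_assoc]
    · refine Finset.sum_congr rfl fun k _ => ?_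
      have a := comm_of_heis hH hρ h0 hX k
      have b := comm_of_heis' hH hρ h0 hX k
      have e1 : Lk k * (X * ρ) * (Lk k)ᴴ = X * (Lk k * ρ * (Lk k)ᴴ) := by
        rw [← Matrix.mul_assoc, a]; simp only [Matrix.mul_assoc]
      have e2 : (Lk k)ᴴ * Lk k * (X * ρ) = X * ((Lk k)ᴴ * Lk k * ρ) := by
        rw [← Matrix.mul_assoc, Matrix.mul_assoc _ _ X, a, ← Matrix.mul_assoc, b]
        simp only [Matrix.mul_assoc]
      rw [e1, e2, mul_sub, Matrix.mul_smul, mul_add, Matrix.mul_assoc X ρ]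
  rw [this, h0, mul_zero]

theorem finrank_ker_heis (Hm : Matrix ι ι ℂ) {m : ℕ} (Lk : Fin m → Matrix ι ι ℂ) :
    Module.finrank ℂ (LinearMap.ker (heis Hm Lk)) =
      Module.finrank ℂ (LinearMap.ker (lindbladMap Hm Lk)) := by
  let e : Matrix ι ι ℂ →ₗ[ℂ] Module.Dual ℂ (Matrix ι ι ℂ) :=
    LinearMap.mk₂ ℂ (fun X Y => (X * Y).trace) (by intros; simp [add_mul]) (by intros; simp)
      (by intros; simp [mul_add]) (by intros; simp)
  have he : Function.Injective e := by
    intro X Y h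
    rw [Matrix.ext_iff_trace_mul_right]
    intro Z
    exact LinearMap.congr_fun h Z
  let e' := LinearEquiv.ofInjectiveOfFinrankEq e he (Subspace.dual_finrank_eq).symm
  have hc : (lindbladMap Hm Lk).dualMap ∘ₗ e = e ∘ₗ heis Hm Lk := by
    refine LinearMap.ext fun X => LinearMap.ext fun Y => ?_
    exact (trace_heis Hm Lk X Y).symm
  have h1 := LinearMap.finrank_range_add_finrank_ker (heis Hm Lk)
  have h2 := LinearMap.finrank_range_add_finrank_ker (lindbladMap Hm Lk)
  have h3 := LinearMap.finrank_range_dualMap_eq_finrank_range (lindbladMap Hm Lk)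
  have hs : LinearMap.range e = ⊤ := LinearMap.range_eq_top.2 e'.surjective
  have h4 : LinearMap.range (lindbladMap Hm Lk).dualMap =
      (LinearMap.range (heis Hm Lk)).map e := by
    rw [← LinearMap.range_comp, ← hc, LinearMap.range_comp, hs, LinearMap.range_eq_map]
  rw [h4, ← (Submodule.equivMapOfInjective e he _).finrank_eq] at h3
  omega

theorem ker_eq_left {Hm : Matrix ι ι ℂ} {m : ℕ} {Lk : Fin m → Matrix ι ι ℂ}
    (hH : Hm.IsHermitian) {ρ : Matrix ι ι ℂ} (hρ : ρ.PosDef) (h0 : lindbladMap Hm Lk ρ = 0)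
    {Y : Matrix ι ι ℂ} (hY : lindbladMap Hm Lk Y = 0) :
    ∃ X, heis Hm Lk X = 0 ∧ Y = X * ρ := by
  have hi : Function.Injective (LinearMap.mulRight ℂ ρ) := by
    intro a b h
    exact hρ.isUnit.mul_right_cancel h
  have := Submodule.eq_of_le_of_finrank_eq
    (S₁ := (LinearMap.ker (heis Hm Lk)).map (LinearMap.mulRight ℂ ρ))
    (S₂ := LinearMap.ker (lindbladMap Hm Lk)) ?_ ?_
  · have hy : Y ∈ LinearMap.ker (lindbladMap Hm Lk) := hY
    rw [← this] at hy
    obtain ⟨X, hX, rfl⟩ := hy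
    exact ⟨X, hX, rfl⟩
  · rintro _ ⟨X, hX, rfl⟩
    exact lindblad_mul_left hH hρ h0 hX
  · rw [← (Submodule.equivMapOfInjective _ hi _).finrank_eq, finrank_ker_heis]

theorem heis_mul {Hm : Matrix ι ι ℂ} {m : ℕ} {Lk : Fin m → Matrix ι ι ℂ}
    (hH : Hm.IsHermitian) {ρ : Matrix ι ι ℂ} (hρ : ρ.PosDef) (h0 : lindbladMap Hm Lk ρ = 0)
    {X Y : Matrix ι ι ℂ} (hX : heis Hm Lk X = 0) (hY : lindbladMap Hm Lk Y = 0) :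
    lindbladMap Hm Lk (X * Y) = 0 := by
  have : lindbladMap Hm Lk (X * Y) = X * lindbladMap Hm Lk Y := by
    rw [lindbladMap_apply, lindbladMap_apply, mul_add, Finset.mul_sum]
    congr 1
    · rw [← Matrix.mul_assoc, comm_H_of_heis hH hρ h0 hX, Matrix.mul_smul, mul_sub]
      simp only [Matrix.mul_assoc]
    · refine Finset.sum_congr rfl fun k _ => ?_
      have a := comm_of_heis hH hρ h0 hX k
      have b := comm_of_heis' hH hρ h0 hX k
      have e1 : Lk k * (X * Y) * (Lk k)ᴴ = X * (Lk k * Y * (Lk k)ᴴ) := by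
        rw [← Matrix.mul_assoc, a]; simp only [Matrix.mul_assoc]
      have e2 : (Lk k)ᴴ * Lk k * (X * Y) = X * ((Lk k)ᴴ * Lk k * Y) := by
        rw [← Matrix.mul_assoc, Matrix.mul_assoc _ _ X, a, ← Matrix.mul_assoc, b]
        simp only [Matrix.mul_assoc]
      rw [e1, e2, mul_sub, Matrix.mul_smul, mul_add, Matrix.mul_assoc X Y]
  rw [this, hY, mul_zero]

theorem mpinv_eq_inv {A : Matrix ι ι ℂ} (hA : IsUnit A) : mpinv A = A⁻¹ := by
  have hd := (Matrix.isUnit_iff_isUnit_det A).1 hA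
  have h : ∃ B : Matrix ι ι ℂ,
      A * B * A = A ∧ B * A * B = B ∧ (A * B)ᴴ = A * B ∧ (B * A)ᴴ = B * A :=
    ⟨A⁻¹, by simp [Matrix.mul_nonsing_inv _ hd], by simp [Matrix.nonsing_inv_mul _ hd],
      by simp [Matrix.mul_nonsing_inv _ hd], by simp [Matrix.nonsing_inv_mul _ hd]⟩
  rw [mpinv, dif_pos h]
  have h1 := h.choose_spec.1
  have h2 : A * h.choose = 1 := hA.mul_right_cancel (by rw [h1, one_mul])
  exact (Matrix.inv_eq_right_inv h2).symm

theorem msqrt_spec {A : Matrix ι ι ℂ} (hA : A.PosSemidef) :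
    (msqrt A).PosSemidef ∧ msqrt A * msqrt A = A := by
  have h : ∃ B : Matrix ι ι ℂ, B.PosSemidef ∧ B * B = A := by
    open scoped MatrixOrder in
    refine ⟨CFC.sqrt A, ?_, ?_⟩
    · exact Matrix.nonneg_iff_posSemidef.1 (CFC.sqrt_nonneg A)
    · exact CFC.sqrt_mul_sqrt_self A (Matrix.nonneg_iff_posSemidef.2 hA)
  rw [msqrt, dif_pos h]
  exact h.choose_spec

/-- A subspace invariant under `Ad(s²)` is invariant under `Ad(s)`, for `s > 0`. -/
theorem modular_sqrt {s : Matrix ι ι ℂ} (hs : s.PosDef) (W : Submodule ℂ (Matrix ι ι ℂ))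
    (hW : ∀ X ∈ W, (s * s) * X * (s * s)⁻¹ ∈ W) {X : Matrix ι ι ℂ} (hX : X ∈ W) :
    s * X * s⁻¹ ∈ W := by
  classical
  set U : Matrix ι ι ℂ := (hs.1.eigenvectorUnitary : Matrix ι ι ℂ) with hU
  set e := hs.1.eigenvalues with he
  have hpos : ∀ i, 0 < e i := hs.eigenvalues_pos
  have hUU : U * Uᴴ = 1 := Unitary.coe_mul_star_self hs.1.eigenvectorUnitary
  have hUU' : Uᴴ * U = 1 := Unitary.coe_star_mul_self hs.1.eigenvectorUnitary
  have hsp : s = U * diagonal (fun i => (e i : ℂ)) * Uᴴ := hs.1.spectral_theorem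
  have hsi : s⁻¹ = U * diagonal (fun i => ((e i)⁻¹ : ℂ)) * Uᴴ := by
    apply Matrix.inv_eq_right_inv
    have : diagonal (fun i => (e i : ℂ)) * diagonal (fun i => ((e i)⁻¹ : ℂ)) = 1 := by
      rw [diagonal_mul_diagonal, ← diagonal_one]
      congr 1; ext i
      exact mul_inv_cancel₀ (by exact_mod_cast (hpos i).ne')
    calc s * (U * diagonal (fun i => ((e i)⁻¹ : ℂ)) * Uᴴ)
        = U * (diagonal (fun i => (e i : ℂ)) * (Uᴴ * U) *
            diagonal (fun i => ((e i)⁻¹ : ℂ))) * Uᴴ := by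
          rw [hsp]; simp only [Matrix.mul_assoc]
      _ = 1 := by rw [hUU', mul_one, this, mul_one, hUU]
  let T : Module.End ℂ (Matrix ι ι ℂ) := LinearMap.mulLeft ℂ s ∘ₗ LinearMap.mulRight ℂ s⁻¹
  have hT : ∀ Z i j, (Uᴴ * T Z * U) i j = (e i / e j : ℂ) * (Uᴴ * Z * U) i j := by
    intro Z i j
    have : Uᴴ * T Z * U = diagonal (fun i => (e i : ℂ)) * (Uᴴ * Z * U) *
        diagonal (fun i => ((e i)⁻¹ : ℂ)) := by
      calc Uᴴ * T Z * U = Uᴴ * (s * (Z * s⁻¹)) * U := rfl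
        _ = (Uᴴ * U) * diagonal (fun i => (e i : ℂ)) * (Uᴴ * Z * U) *
            diagonal (fun i => ((e i)⁻¹ : ℂ)) * (Uᴴ * U) := by
          rw [hsi, hsp]; simp only [Matrix.mul_assoc]
        _ = _ := by rw [hUU', mul_one, one_mul]
    rw [this, Matrix.mul_diagonal, Matrix.diagonal_mul]
    ring
  let D : Module.End ℂ (Matrix ι ι ℂ) := T * T
  have hD : ∀ Z i j, (Uᴴ * D Z * U) i j = (e i / e j : ℂ)^2 * (Uᴴ * Z * U) i j := by
    intro Z i j
    change (Uᴴ * T (T Z) * U) i j = _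
    rw [hT, hT]; ring
  have hDW : ∀ Z ∈ W, D Z ∈ W := by
    intro Z hZ
    have := hW Z hZ
    rw [Matrix.mul_inv_rev] at this
    have h2 : D Z = s * s * Z * (s⁻¹ * s⁻¹) := by
      change s * ((s * (Z * s⁻¹)) * s⁻¹) = _
      simp only [Matrix.mul_assoc]
    rwa [h2]
  have hpW : ∀ p : Polynomial ℂ, ∀ Z ∈ W, Polynomial.aeval D p Z ∈ W := by
    intro p
    induction p using Polynomial.induction_on' with
    | add p q hp hq =>
      intro Z hZ
      rw [map_add]
      exact W.add_mem (hp Z hZ) (hq Z hZ)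
    | monomial n a =>
      intro Z hZ
      rw [Polynomial.aeval_monomial]
      have : ∀ n : ℕ, (D ^ n) Z ∈ W := by
        intro n
        induction n with
        | zero => simpa using hZ
        | succ n ih => rw [pow_succ']; exact hDW _ ih
      rw [← Algebra.smul_def]
      exact W.smul_mem _ (this n)
  have hpe : ∀ p : Polynomial ℂ, ∀ Z i j, (Uᴴ * Polynomial.aeval D p Z * U) i j =
      p.eval ((e i / e j : ℂ)^2) * (Uᴴ * Z * U) i j := by
    intro p
    induction p using Polynomial.induction_on' with
    | add p q hp hq =>
      intro Z i j
      rw [map_add, LinearMap.add_apply, mul_add, add_mul, Matrix.add_apply, hp, hq,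
        Polynomial.eval_add, add_mul]
    | monomial n a =>
      intro Z i j
      have hmon : (Uᴴ * (D ^ n) Z * U) i j = ((e i / e j : ℂ)^2) ^ n * (Uᴴ * Z * U) i j := by
        induction n with
        | zero => simp
        | succ n ih =>
          rw [pow_succ' D]
          change (Uᴴ * D ((D ^ n) Z) * U) i j = _
          rw [hD, ih]; ring
      rw [Polynomial.aeval_monomial, ← Algebra.smul_def, LinearMap.smul_apply, Matrix.mul_smul,
        Matrix.smul_mul, Matrix.smul_apply, Polynomial.eval_monomial, smul_eq_mul, hmon]
      ring
  let S : Finset ℂ := (Finset.univ : Finset (ι × ι)).image fun p => (e p.1 / e p.2 : ℂ)^2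
  let g : ℂ → ℂ := fun z => (Real.sqrt z.re : ℂ)
  let p := Lagrange.interpolate S id g
  have hp : ∀ i j, p.eval ((e i / e j : ℂ)^2) = (e i / e j : ℂ) := by
    intro i j
    have hm : (e i / e j : ℂ)^2 ∈ S := Finset.mem_image.2 ⟨(i, j), Finset.mem_univ _, rfl⟩
    have := Lagrange.eval_interpolate_at_node (v := id) g (Set.injOn_id _) hm
    rw [id] at this
    rw [this]
    have h2 : (e i / e j : ℂ)^2 = (((e i / e j)^2 : ℝ) : ℂ) := by push_cast; rfl
    change ((Real.sqrt ((e i / e j : ℂ)^2).re : ℝ) : ℂ) = _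
    rw [h2, Complex.ofReal_re, Real.sqrt_sq (div_pos (hpos i) (hpos j)).le]
    push_cast; rfl
  have hfin : T X = Polynomial.aeval D p X := by
    have h1 : Uᴴ * T X * U = Uᴴ * Polynomial.aeval D p X * U := by
      ext i j
      rw [hT, hpe, hp]
    have h2 : ∀ Z : Matrix ι ι ℂ, U * (Uᴴ * Z * U) * Uᴴ = Z := by
      intro Z
      calc U * (Uᴴ * Z * U) * Uᴴ = (U * Uᴴ) * Z * (U * Uᴴ) := by simp only [Matrix.mul_assoc]
        _ = Z := by rw [hUU, one_mul, mul_one]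
    rw [← h2 (T X), h1, h2]
  have : s * X * s⁻¹ = T X := Matrix.mul_assoc _ _ _
  rw [this, hfin]
  exact hpW p X hX

/-- If the distorted algebra generated by a set of fixed points is everything, then the
generator vanishes. -/
theorem lindblad_zero_of_Fdist_top {Hm : Matrix ι ι ℂ} {m : ℕ} {Lk : Fin m → Matrix ι ι ℂ}
    (hH : Hm.IsHermitian) {ρ : Matrix ι ι ℂ} (hρ : ρ.PosDef) (h0 : lindbladMap Hm Lk ρ = 0)
    {W : Set (Matrix ι ι ℂ)} (hW : ∀ X ∈ W, lindbladMap Hm Lk X = 0) (hF : Fdist ρ W = ⊤)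
    (X : Matrix ι ι ℂ) : lindbladMap Hm Lk X = 0 := by
  have hd := (Matrix.isUnit_iff_isUnit_det ρ).1 hρ.isUnit
  have hle : Fdist ρ W ≤ LinearMap.ker (lindbladMap Hm Lk) := by
    refine sInf_le ⟨fun X hX => hW X hX, ?_, ?_, ?_⟩
    · intro X hX
      rw [LinearMap.mem_ker] at hX ⊢
      rw [lindblad_star hH, hX, conjTranspose_zero]
    · intro X hX Y hY
      rw [LinearMap.mem_ker] at hX hY ⊢
      obtain ⟨Z, hZ, rfl⟩ := ker_eq_left hH hρ h0 hX
      rw [mpinv_eq_inv hρ.isUnit, Matrix.mul_assoc Z, Matrix.mul_nonsing_inv _ hd, mul_one]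
      exact heis_mul hH hρ h0 hZ hY
    · obtain ⟨hs, hss⟩ := msqrt_spec hρ.posSemidef
      have hsu : IsUnit (msqrt ρ) := by
        rw [Matrix.isUnit_iff_isUnit_det]
        have := hd
        rw [← hss, det_mul] at this
        exact isUnit_of_mul_isUnit_left this
      have hspd : (msqrt ρ).PosDef := hs.posDef_iff_isUnit.2 hsu
      rw [mpinv_eq_inv hsu]
      intro X hX
      refine modular_sqrt hspd _ ?_ hX
      rw [hss]
      intro X hX
      rw [LinearMap.mem_ker] at hX ⊢
      obtain ⟨Z, hZ, rfl⟩ := ker_eq_left hH hρ h0 hX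
      have e1 : ρ * (Z * ρ) * ρ⁻¹ = (Zᴴ * ρ)ᴴ := by
        rw [← Matrix.mul_assoc, Matrix.mul_assoc _ ρ, Matrix.mul_nonsing_inv _ hd, mul_one,
          conjTranspose_mul, conjTranspose_conjTranspose, hρ.1.eq]
      rw [e1, lindblad_star hH,
        heis_mul hH hρ h0 (by rw [heis_star hH, hZ, conjTranspose_zero]) h0, conjTranspose_zero]
  exact hle (hF ▸ Submodule.mem_top)

end AuxSingle

set_option linter.unusedSectionVars false

/-! ### Auxiliary material: bipartite slices -/

section AuxSlice

variable {ι α β : Type*} [Fintype ι] [DecidableEq ι] [Fintype α] [DecidableEq α]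
  [Fintype β] [DecidableEq β]

/-- The operator `A ⊗ 1` transported along `e`. -/
noncomputable def glift (e : ι ≃ α × β) (A : Matrix α α ℂ) : Matrix ι ι ℂ :=
  (Matrix.kroneckerMap (· * ·) A (1 : Matrix β β ℂ)).submatrix e e

/-- The `(k, k')` block of an operator. -/
noncomputable def slice (e : ι ≃ α × β) (k k' : β) : Matrix ι ι ℂ →ₗ[ℂ] Matrix α α ℂ where
  toFun M := Matrix.of fun i j => M (e.symm (i, k)) (e.symm (j, k'))
  map_add' _ _ := rfl
  map_smul' _ _ := rfl

theorem slice_apply (e : ι ≃ α × β) (k k' : β) (M : Matrix ι ι ℂ) (i j : α) :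
    slice e k k' M i j = M (e.symm (i, k)) (e.symm (j, k')) := rfl

theorem slice_ext (e : ι ≃ α × β) {M M' : Matrix ι ι ℂ}
    (h : ∀ k k', slice e k k' M = slice e k k' M') : M = M' := by
  ext x y
  have := congrFun (congrFun (h (e x).2 (e y).2) (e x).1) (e y).1
  simpa [slice_apply] using this

theorem glift_conjTranspose (e : ι ≃ α × β) (A : Matrix α α ℂ) :
    (glift e A)ᴴ = glift e Aᴴ := by
  ext x y
  simp only [glift, conjTranspose_apply, submatrix_apply, kroneckerMap_apply, star_mul']
  congr 1
  simp only [Matrix.one_apply, eq_comm]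
  split_ifs <;> simp

theorem slice_glift_mul (e : ι ≃ α × β) (k k' : β) (A : Matrix α α ℂ) (M : Matrix ι ι ℂ) :
    slice e k k' (glift e A * M) = A * slice e k k' M := by
  ext i j
  rw [slice_apply, Matrix.mul_apply, Matrix.mul_apply, ← e.symm.sum_comp, Fintype.sum_prod_type]
  refine Finset.sum_congr rfl fun a _ => ?_
  simp [glift, slice_apply, Matrix.one_apply]

theorem slice_mul_glift (e : ι ≃ α × β) (k k' : β) (A : Matrix α α ℂ) (M : Matrix ι ι ℂ) :
    slice e k k' (M * glift e A) = slice e k k' M * A := by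
  ext i j
  rw [slice_apply, Matrix.mul_apply, Matrix.mul_apply, ← e.symm.sum_comp, Fintype.sum_prod_type]
  refine Finset.sum_congr rfl fun a _ => ?_
  simp [glift, slice_apply, Matrix.one_apply]

theorem glift_mul (e : ι ≃ α × β) (A B : Matrix α α ℂ) :
    glift e A * glift e B = glift e (A * B) := by
  rw [glift, glift, Matrix.submatrix_mul_equiv]
  have := Matrix.mul_kronecker_mul A B (1 : Matrix β β ℂ) (1 : Matrix β β ℂ)
  rw [one_mul] at this
  rw [glift]
  exact congrArg (fun M => M.submatrix e e) this.symm

theorem slice_lindblad (e : ι ≃ α × β) (k k' : β) (H : Matrix α α ℂ) {m : ℕ}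
    (Lk : Fin m → Matrix α α ℂ) (M : Matrix ι ι ℂ) :
    slice e k k' (lindbladMap (glift e H) (fun q => glift e (Lk q)) M) =
      lindbladMap H Lk (slice e k k' M) := by
  rw [lindbladMap_apply, lindbladMap_apply]
  simp only [map_add, map_smul, map_sub, map_sum, glift_conjTranspose, glift_mul, slice_glift_mul,
    slice_mul_glift]

/-- The partial trace, as a sum of diagonal slices. -/
noncomputable def gptr (e : ι ≃ α × β) (M : Matrix ι ι ℂ) : Matrix α α ℂ := ∑ k, slice e k k M

theorem gptr_posDef [Nonempty β] (e : ι ≃ α × β) {M : Matrix ι ι ℂ} (hM : M.PosDef) :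
    (gptr e M).PosDef := by
  refine Matrix.posDef_sum Finset.univ_nonempty fun k _ => ?_
  refine hM.submatrix (e := fun i => e.symm (i, k)) ?_
  intro a b h
  simpa using h

theorem gptr_trace (e : ι ≃ α × β) (M : Matrix ι ι ℂ) : (gptr e M).trace = M.trace := by
  rw [gptr, trace_sum]
  simp only [Matrix.trace, Matrix.diag_apply, slice_apply]
  rw [← e.symm.sum_comp, Fintype.sum_prod_type_right]

theorem lindblad_prod_zero (e : ι ≃ α × β) {H : Matrix α α ℂ} {m : ℕ}
    {Lk : Fin m → Matrix α α ℂ} {M : Matrix ι ι ℂ}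
    (h : lindbladMap (glift e H) (fun q => glift e (Lk q)) M = 0) (B : Matrix β β ℂ) :
    lindbladMap (glift e H) (fun q => glift e (Lk q))
      ((Matrix.kroneckerMap (· * ·) (gptr e M) B).submatrix e e) = 0 := by
  apply slice_ext e
  intro k k'
  rw [slice_lindblad, map_zero]
  have h1 : slice e k k' ((Matrix.kroneckerMap (· * ·) (gptr e M) B).submatrix e e) =
      B k k' • gptr e M := by
    ext i j
    simp [slice_apply, mul_comm]
  rw [h1, map_smul, gptr, map_sum, Finset.sum_eq_zero, smul_zero]
  intro q _
  rw [← slice_lindblad, h, map_zero]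

end AuxSlice

section AuxMulti

variable {n : ℕ} {d : Fin n → Type*} [∀ a, Fintype (d a)] [∀ a, DecidableEq (d a)]

theorem nbhdPtrace_eq (N : Finset (Fin n)) (ρ : Matrix (∀ a, d a) (∀ a, d a) ℂ) :
    nbhdPtrace d N ρ = gptr (splitEquiv d N) ρ := by
  ext i j
  simp [nbhdPtrace, gptr, Matrix.sum_apply, slice_apply]

theorem nbhdSchmidt_mem (N : Finset (Fin n)) (ρ : Matrix (∀ a, d a) (∀ a, d a) ℂ)
    (B : Matrix (nbhdCoIdx d N) (nbhdCoIdx d N) ℂ) :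
    nbhdPtrace d N (coLift d N B * ρ) =
      ∑ k, ∑ k', B k k' • slice (splitEquiv d N) k' k ρ := by
  ext i j
  simp only [nbhdPtrace, of_apply, Matrix.sum_apply, Matrix.smul_apply, slice_apply, smul_eq_mul]
  refine Finset.sum_congr rfl fun k _ => ?_
  rw [Matrix.mul_apply, ← (splitEquiv d N).symm.sum_comp, Fintype.sum_prod_type_right]
  refine Finset.sum_congr rfl fun k' _ => ?_
  simp [coLift, splitLift, Matrix.one_apply]

theorem nbhdLift_apply (N : Finset (Fin n)) (A : Matrix (nbhdIdx d N) (nbhdIdx d N) ℂ)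
    (x y : ∀ a, d a) : nbhdLift d N A x y =
      A (fun a => x a) (fun a => y a) * (if ∀ a, a ∉ N → x a = y a then 1 else 0) := by
  have : (fun a : {a // a ∉ N} => x a) = (fun a : {a // a ∉ N} => y a) ↔
      ∀ a, a ∉ N → x a = y a := by
    simp [funext_iff]
  simp only [nbhdLift, splitLift, submatrix_apply, kroneckerMap_apply, splitEquiv,
    Equiv.piEquivPiSubtypeProd_apply, Matrix.one_apply, this]

theorem nbhdLift_eq_glift (N : Finset (Fin n)) (A : Matrix (nbhdIdx d N) (nbhdIdx d N) ℂ) :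
    nbhdLift d N A = glift (splitEquiv d N) A := rfl

/-- Extend an operator on `N ⊆ P` to `P`. -/
theorem exists_lift_of_subset {N P : Finset (Fin n)} (h : N ⊆ P) :
    ∃ f : Matrix (nbhdIdx d N) (nbhdIdx d N) ℂ → Matrix (nbhdIdx d P) (nbhdIdx d P) ℂ,
      ∀ A, nbhdLift d N A = glift (splitEquiv d P) (f A) := by
  refine ⟨fun A => Matrix.of fun i j =>
    A (fun a => i ⟨a, h a.2⟩) (fun a => j ⟨a, h a.2⟩) *
      (if ∀ a : {x // x ∈ P}, a.1 ∉ N → i a = j a then 1 else 0), fun A => ?_⟩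
  ext x y
  rw [← nbhdLift_eq_glift, nbhdLift_apply, nbhdLift_apply]
  simp only [of_apply]
  rw [mul_assoc]
  congr 1
  rw [mul_ite, mul_one, mul_zero, ← ite_and]
  refine if_congr ⟨fun H => ⟨fun a ha => H a fun hN => ha (h hN), fun a ha => H a ha⟩, ?_⟩ rfl rfl
  rintro ⟨h2, h1⟩ a ha
  by_cases hP : a ∈ P
  · exact h1 ⟨a, hP⟩ ha
  · exact h2 a hP

/-- Extend an operator on `N` disjoint from `P` to the complement of `P`. -/
theorem exists_lift_of_disjoint {N P : Finset (Fin n)} (h : ∀ a ∈ N, a ∉ P) :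
    ∃ f : Matrix (nbhdIdx d N) (nbhdIdx d N) ℂ → Matrix (nbhdCoIdx d P) (nbhdCoIdx d P) ℂ,
      ∀ A, nbhdLift d N A = glift ((splitEquiv d P).trans (Equiv.prodComm _ _)) (f A) := by
  refine ⟨fun A => Matrix.of fun i j =>
    A (fun a => i ⟨a, h a a.2⟩) (fun a => j ⟨a, h a a.2⟩) *
      (if ∀ a : {x // x ∉ P}, a.1 ∉ N → i a = j a then 1 else 0), fun A => ?_⟩
  ext x y
  have : (fun a : {a // a ∈ P} => x a) = (fun a : {a // a ∈ P} => y a) ↔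
      ∀ a, a ∈ P → x a = y a := by
    simp [funext_iff]
  rw [nbhdLift_apply]
  simp only [glift, submatrix_apply, kroneckerMap_apply, of_apply, splitEquiv,
    Equiv.trans_apply, Equiv.prodComm_apply, Equiv.piEquivPiSubtypeProd_apply, Prod.swap_prod_mk,
    Matrix.one_apply, this]
  rw [mul_assoc]
  congr 1
  rw [mul_ite, mul_one, mul_zero, ← ite_and]
  refine if_congr ⟨fun H => ⟨fun a ha => H a fun hN => h a hN ha, fun a ha => H a ha⟩, ?_⟩ rfl rfl
  rintro ⟨h2, h1⟩ a ha
  by_cases hP : a ∈ P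
  · exact h2 a hP
  · exact h1 ⟨a, hP⟩ ha

theorem splitLift_swap (P : Finset (Fin n)) (A : Matrix (nbhdIdx d P) (nbhdIdx d P) ℂ)
    (B : Matrix (nbhdCoIdx d P) (nbhdCoIdx d P) ℂ) :
    splitLift d P A B = (Matrix.kroneckerMap (· * ·) B A).submatrix
      ((splitEquiv d P).trans (Equiv.prodComm _ _))
      ((splitEquiv d P).trans (Equiv.prodComm _ _)) := by
  ext x y
  simp [splitLift, mul_comm]

theorem nbhdGen_zero {N : Finset (Fin n)} {ρ : Matrix (∀ a, d a) (∀ a, d a) ℂ}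
    [Nonempty (nbhdCoIdx d N)] (hρ : ρ.PosDef)
    {L : Matrix (∀ a, d a) (∀ a, d a) ℂ →ₗ[ℂ] Matrix (∀ a, d a) (∀ a, d a) ℂ}
    (hL : IsNbhdGen d N L) (h0 : L ρ = 0)
    (hfull : Fdist (nbhdPtrace d N ρ) (nbhdSchmidt d N ρ) = ⊤)
    (X : Matrix (∀ a, d a) (∀ a, d a) ℂ) : L X = 0 := by
  obtain ⟨H, hH, m, Lk, rfl⟩ := hL
  simp only [nbhdLift_eq_glift] at h0 ⊢
  have hs : ∀ k k', lindbladMap H Lk (slice (splitEquiv d N) k k' ρ) = 0 := by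
    intro k k'
    rw [← slice_lindblad, h0, map_zero]
  apply slice_ext (splitEquiv d N)
  intro k k'
  rw [slice_lindblad, map_zero]
  refine lindblad_zero_of_Fdist_top hH (ρ := nbhdPtrace d N ρ) ?_ ?_ ?_ hfull _
  · rw [nbhdPtrace_eq]
    exact gptr_posDef _ hρ
  · rw [nbhdPtrace_eq, gptr, map_sum]
    exact Finset.sum_eq_zero fun k _ => hs k k
  · rintro _ ⟨B, rfl⟩
    rw [nbhdSchmidt_mem]
    simp only [map_sum, map_smul, hs, smul_zero, Finset.sum_const_zero]

end AuxMulti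
/-! ### Statement 15 -/

theorem stmt15
    {m : ℕ} {d : Fin (m + 1) → Type*} [∀ a, Fintype (d a)] [∀ a, DecidableEq (d a)]
    (ρ : Matrix (∀ a, d a) (∀ a, d a) ℂ) (hρ : ρ.PosDef) (hρtr : ρ.trace = 1)
    (hffqls : IsFFQLS d
      (fun j : Fin m => ({j.castSucc, j.succ} : Finset (Fin (m + 1)))) ρ)
    (l : Fin m)
    (hfull : Fdist (nbhdPtrace d ({l.castSucc, l.succ} : Finset (Fin (m + 1))) ρ)
        (nbhdSchmidt d ({l.castSucc, l.succ} : Finset (Fin (m + 1))) ρ) = ⊤) :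
    ∃ (ρL : Matrix (nbhdIdx d (Finset.univ.filter fun a => a ≤ l.castSucc))
        (nbhdIdx d (Finset.univ.filter fun a => a ≤ l.castSucc)) ℂ)
      (ρR : Matrix (nbhdCoIdx d (Finset.univ.filter fun a => a ≤ l.castSucc))
        (nbhdCoIdx d (Finset.univ.filter fun a => a ≤ l.castSucc)) ℂ),
      IsDensity ρL ∧ IsDensity ρR ∧
        ρ = splitLift d (Finset.univ.filter fun a => a ≤ l.castSucc) ρL ρR := by
  classical
  obtain ⟨Lj, hgen, hff, hρ0, hgas⟩ := hffqls
  have hdens : IsDensity ρ := ⟨hρ.posSemidef, hρtr⟩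
  have hj0 := hff ρ hdens hρ0
  have hne : Nonempty (∀ a, d a) := by
    by_contra hcon
    rw [not_nonempty_iff] at hcon
    simp [Matrix.trace] at hρtr
  obtain ⟨x0⟩ := hne
  have hz : ∀ X, Lj l X = 0 := by
    have : Nonempty (nbhdCoIdx d ({l.castSucc, l.succ} : Finset (Fin (m + 1)))) :=
      ⟨fun a => x0 a⟩
    exact nbhdGen_zero hρ (hgen l) (hj0 l) hfull
  set P : Finset (Fin (m + 1)) := Finset.univ.filter fun a => a ≤ l.castSucc with hP
  have hmem : ∀ a, a ∈ P ↔ a ≤ l.castSucc := by intro a; simp [hP]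
  have : Nonempty (nbhdCoIdx d P) := ⟨fun a => x0 a⟩
  have : Nonempty (nbhdIdx d P) := ⟨fun a => x0 a⟩
  set e := splitEquiv d P with he
  set e' := (splitEquiv d P).trans (Equiv.prodComm _ _) with he'
  have hσd : IsDensity (splitLift d P (gptr e ρ) (gptr e' ρ)) := by
    constructor
    · exact ((gptr_posDef e hρ).posSemidef.kronecker (gptr_posDef e' hρ).posSemidef).submatrix _
    · have h1 : (splitLift d P (gptr e ρ) (gptr e' ρ)).trace =
          (Matrix.kroneckerMap (· * ·) (gptr e ρ) (gptr e' ρ)).trace := by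
        simp only [splitLift, Matrix.trace, Matrix.diag_apply, submatrix_apply]
        exact (splitEquiv d P).sum_comp
          (fun p => Matrix.kroneckerMap (· * ·) (gptr e ρ) (gptr e' ρ) p p)
      rw [h1]
      refine (Matrix.trace_kronecker _ _).trans ?_
      rw [gptr_trace, gptr_trace, hρtr, mul_one]
  refine ⟨gptr e ρ, gptr e' ρ, ⟨(gptr_posDef e hρ).posSemidef, by rw [gptr_trace, hρtr]⟩,
    ⟨(gptr_posDef e' hρ).posSemidef, by rw [gptr_trace, hρtr]⟩, ?_⟩
  set σ := splitLift d P (gptr e ρ) (gptr e' ρ) with hσ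
  have hσ0 : (∑ j, Lj j) σ = 0 := by
    rw [LinearMap.sum_apply]
    refine Finset.sum_eq_zero fun j _ => ?_
    rcases lt_trichotomy j l with hjl | rfl | hjl
    · obtain ⟨H, -, q, Lk, hL⟩ := hgen j
      have hsub : ({j.castSucc, j.succ} : Finset (Fin (m + 1))) ⊆ P := by
        intro a ha
        rw [hmem]
        simp only [Finset.mem_insert, Finset.mem_singleton] at ha
        rw [Fin.lt_def] at hjl
        rcases ha with rfl | rfl <;> rw [Fin.le_def] <;> simp <;> omega
      obtain ⟨f, hf⟩ := exists_lift_of_subset (d := d) hsub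
      have h0 := hj0 j
      rw [hL] at h0 ⊢
      simp only [hf] at h0 ⊢
      exact lindblad_prod_zero e h0 _
    · exact hz σ
    · obtain ⟨H, -, q, Lk, hL⟩ := hgen j
      have hdis : ∀ a ∈ ({j.castSucc, j.succ} : Finset (Fin (m + 1))), a ∉ P := by
        intro a ha
        rw [hmem]
        simp only [Finset.mem_insert, Finset.mem_singleton] at ha
        rw [Fin.lt_def] at hjl
        rcases ha with rfl | rfl <;> rw [Fin.le_def] <;> simp <;> omega
      obtain ⟨f, hf⟩ := exists_lift_of_disjoint (d := d) hdis
      have h0 := hj0 j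
      rw [hL] at h0 ⊢
      simp only [hf] at h0 ⊢
      rw [hσ, splitLift_swap]
      exact lindblad_prod_zero e' h0 _
  have ht := hgas σ hσd (fun _ => σ) rfl (by
    intro t i j
    rw [hσ0]
    exact hasDerivAt_const t (σ i j))
  ext i j
  exact tendsto_nhds_unique (ht i j) tendsto_const_nhds

end QDS
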